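/- Let λ, c, μ > 0, r ∈ (0,1] and ρ ≥ 0, let f(x) = μ e^{−μ x} for x > 0 (and 0 otherwise), and let ζ(x) = e^{ρ x} for x ≥ 0 (and 0 for x < 0). Then for every x ≥ 0, Σ_{n=0}^∞ (λ r / c)ⁿ ((T_ρ f)^{*n} * ζ)(x) = e^{ρ x} + Σ_{n=1}^∞ (λ r μ)ⁿ / ( (n−1)! cⁿ (ρ+μ)ⁿ ) · e^{ρ x} ∫_0^x y^{n−1} e^{−(ρ+μ) y} dy, where the n = 0 term on the left is ζ(x), both series converging absolutely. -/

import Mathlib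

open MeasureTheory

/-- The Dickson–Hipp operator `T_r g(x) = ∫_x^∞ e^{-r(u-x)} g(u) du`. -/
noncomputable def dickson (r : ℝ) (g : ℝ → ℝ) (x : ℝ) : ℝ :=
  ∫ u in Set.Ioi x, Real.exp (-r * (u - x)) * g u

/-- Convolution of functions vanishing on `(-∞, 0]`:
`(g * h)(x) = ∫_0^x g(x-y) h(y) dy`. -/
noncomputable def conv (g h : ℝ → ℝ) (x : ℝ) : ℝ :=
  ∫ y in (0 : ℝ)..x, g (x - y) * h y

/-- `nconv g n = g^{*(n+1)}`, the `(n+1)`-fold convolution of `g` with itself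
(so that `nconv g 0 = g^{*1} = g`). -/
noncomputable def nconv (g : ℝ → ℝ) : ℕ → ℝ → ℝ
  | 0 => g
  | n + 1 => conv g (nconv g n)

/-!
Weighting by `e^{ax}` commutes with convolution, so convolution powers of an exponential reduce to
those of a constant, which are monomials. The Dickson–Hipp transform of an exponential density is
again a multiple of the same exponential, and convolving with `e^{ρx}` is a truncated Laplace
transform times `e^{ρx}`; hence the two series agree term by term. The `n`-th term is
`O((A x)ⁿ / n!)` with `A = λrμ / (c(ρ + μ))`, which gives absolute convergence.
-/

section DicksonHipp

theorem dickson_congr {r x : ℝ} {f g : ℝ → ℝ} (h : Set.EqOn f g (Set.Ioi x)) :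
    dickson r f x = dickson r g x :=
  setIntegral_congr_fun measurableSet_Ioi fun u hu => by simp only [h hu]

theorem dickson_const_mul_exp {ρ μ : ℝ} (hρμ : 0 < ρ + μ) (K x : ℝ) :
    dickson ρ (fun u => K * Real.exp (-μ * u)) x = K / (ρ + μ) * Real.exp (-μ * x) := by
  have integrand (u : ℝ) : Real.exp (-ρ * (u - x)) * (K * Real.exp (-μ * u))
      = K * Real.exp (ρ * x) * Real.exp (-(ρ + μ) * u) := by
    rw [mul_left_comm, mul_assoc, ← Real.exp_add, ← Real.exp_add]
    ring_nf
  have exponent : Real.exp (ρ * x) * Real.exp (-(ρ + μ) * x) = Real.exp (-μ * x) := by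
    rw [← Real.exp_add]
    ring_nf
  calc dickson ρ (fun u => K * Real.exp (-μ * u)) x
      = K * Real.exp (ρ * x) * ∫ u in Set.Ioi x, Real.exp (-(ρ + μ) * u) := by
        simp only [dickson, integrand, integral_const_mul]
    _ = K / (ρ + μ) * (Real.exp (ρ * x) * Real.exp (-(ρ + μ) * x)) := by
        rw [integral_exp_mul_Ioi (neg_neg_of_pos hρμ), neg_div_neg_eq]
        ring
    _ = K / (ρ + μ) * Real.exp (-μ * x) := by rw [exponent]

end DicksonHipp

section Convolution

theorem conv_comm (g h : ℝ → ℝ) (x : ℝ) : conv g h x = conv h g x := by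
  have reflect := intervalIntegral.integral_comp_sub_left (a := 0) (b := x)
    (fun y => h (x - y) * g y) x
  simpa only [conv, sub_sub_cancel, sub_self, sub_zero, mul_comm] using reflect

theorem conv_congr {g₁ g₂ h₁ h₂ : ℝ → ℝ} {x : ℝ} (hg : Set.EqOn g₁ g₂ (Set.uIcc 0 x))
    (hh : Set.EqOn h₁ h₂ (Set.uIcc 0 x)) : conv g₁ h₁ x = conv g₂ h₂ x := by
  refine intervalIntegral.integral_congr fun y hy => ?_
  have hxy : x - y ∈ Set.uIcc 0 x := by
    simp only [Set.mem_uIcc] at hy ⊢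
    grind
  simp only [hg hxy, hh hy]

theorem nconv_congr {g₁ g₂ : ℝ → ℝ} {a : ℝ} (hg : Set.EqOn g₁ g₂ (Set.uIcc 0 a)) (n : ℕ) :
    Set.EqOn (nconv g₁ n) (nconv g₂ n) (Set.uIcc 0 a) := by
  induction n with
  | zero => exact hg
  | succ n ih =>
    intro x hx
    have hsub : Set.uIcc 0 x ⊆ Set.uIcc 0 a := Set.uIcc_subset_uIcc_left hx
    exact conv_congr (hg.mono hsub) (ih.mono hsub)

theorem conv_exp_mul (a : ℝ) (g h : ℝ → ℝ) (x : ℝ) :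
    conv (fun y => Real.exp (a * y) * g y) (fun y => Real.exp (a * y) * h y) x
      = Real.exp (a * x) * conv g h x := by
  have exponent (y : ℝ) : Real.exp (a * x) = Real.exp (a * (x - y)) * Real.exp (a * y) := by
    rw [← Real.exp_add]
    ring_nf
  rw [conv, conv, ← intervalIntegral.integral_const_mul]
  congr 1 with y
  rw [exponent y]
  ring

theorem nconv_exp_mul (a : ℝ) (g : ℝ → ℝ) (n : ℕ) :
    nconv (fun y => Real.exp (a * y) * g y) n = fun x => Real.exp (a * x) * nconv g n x := by
  induction n with
  | zero => rfl
  | succ n ih =>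
    funext x
    rw [nconv, ih, conv_exp_mul, nconv]

theorem nconv_const (K : ℝ) (n : ℕ) :
    nconv (fun _ => K) n = fun x => K ^ (n + 1) / (n.factorial : ℝ) * x ^ n := by
  induction n with
  | zero => simp [nconv]
  | succ n ih =>
    funext x
    rw [nconv, ih, conv, intervalIntegral.integral_const_mul,
      intervalIntegral.integral_const_mul, integral_pow, Nat.factorial_succ]
    push_cast
    rw [zero_pow n.succ_ne_zero, sub_zero]
    field_simp
    ring

theorem nconv_const_mul_exp (K a : ℝ) (n : ℕ) (x : ℝ) :
    nconv (fun y => K * Real.exp (a * y)) n x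
      = K ^ (n + 1) / (n.factorial : ℝ) * x ^ n * Real.exp (a * x) := by
  simp only [mul_comm K, nconv_exp_mul, nconv_const]
  ring

theorem conv_exp_right (g : ℝ → ℝ) (a x : ℝ) :
    conv g (fun y => Real.exp (a * y)) x
      = Real.exp (a * x) * ∫ y in (0 : ℝ)..x, g y * Real.exp (-a * y) := by
  have exponent (y : ℝ) : Real.exp (a * (x - y)) = Real.exp (a * x) * Real.exp (-a * y) := by
    rw [← Real.exp_add]
    ring_nf
  rw [conv_comm, conv, ← intervalIntegral.integral_const_mul]
  congr 1 with y
  rw [exponent y]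
  ring

theorem conv_nconv_const_mul_exp_exp (K μ ρ : ℝ) (n : ℕ) (x : ℝ) :
    conv (nconv (fun y => K * Real.exp (-μ * y)) n) (fun y => Real.exp (ρ * y)) x
      = K ^ (n + 1) / (n.factorial : ℝ) * Real.exp (ρ * x)
        * ∫ y in (0 : ℝ)..x, y ^ n * Real.exp (-(ρ + μ) * y) := by
  have integrand (y : ℝ) :
      nconv (fun y => K * Real.exp (-μ * y)) n y * Real.exp (-ρ * y)
        = K ^ (n + 1) / (n.factorial : ℝ) * (y ^ n * Real.exp (-(ρ + μ) * y)) := by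
    rw [nconv_const_mul_exp, mul_assoc, ← Real.exp_add, mul_assoc]
    ring_nf
  rw [conv_exp_right]
  simp only [integrand, intervalIntegral.integral_const_mul]
  ring

end Convolution

section Summability

theorem abs_integral_pow_mul_le {w : ℝ → ℝ} {x : ℝ} (hw : IntervalIntegrable w volume 0 x)
    (n : ℕ) :
    |∫ y in (0 : ℝ)..x, y ^ n * w y| ≤ |x| ^ n * |(∫ y in (0 : ℝ)..x, |w y|)| := by
  have pointwise : ∀ y ∈ Set.uIoc 0 x, ‖y ^ n * w y‖ ≤ |x| ^ n * |w y| := by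
    intro y hy
    have hyx : |y| ≤ |x| := by
      simpa using Set.abs_sub_left_of_mem_uIcc (Set.uIoc_subset_uIcc hy)
    rw [norm_mul, norm_pow, Real.norm_eq_abs, Real.norm_eq_abs]
    gcongr
  calc |∫ y in (0 : ℝ)..x, y ^ n * w y|
      ≤ |(∫ y in (0 : ℝ)..x, |x| ^ n * |w y|)| :=
        intervalIntegral.norm_integral_le_abs_of_norm_le
          ((ae_restrict_iff' measurableSet_uIoc).mpr (ae_of_all _ pointwise))
          (hw.abs.const_mul _)
    _ = |x| ^ n * |(∫ y in (0 : ℝ)..x, |w y|)| := by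
        rw [intervalIntegral.integral_const_mul, abs_mul, abs_of_nonneg (by positivity)]

theorem summable_abs_pow_div_factorial_mul_integral_pow_mul {w : ℝ → ℝ} {x : ℝ}
    (hw : IntervalIntegrable w volume 0 x) (A : ℝ) :
    Summable fun n : ℕ =>
      |A ^ n / (n.factorial : ℝ) * ∫ y in (0 : ℝ)..x, y ^ n * w y| := by
  refine .of_nonneg_of_le (fun n => abs_nonneg _) (fun n => ?_)
    ((Real.summable_pow_div_factorial (|A| * |x|)).mul_right |(∫ y in (0 : ℝ)..x, |w y|)|)
  calc |A ^ n / (n.factorial : ℝ) * ∫ y in (0 : ℝ)..x, y ^ n * w y|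
      = |A| ^ n / (n.factorial : ℝ) * |∫ y in (0 : ℝ)..x, y ^ n * w y| := by
        rw [abs_mul, abs_div, abs_pow, Nat.abs_cast]
    _ ≤ |A| ^ n / (n.factorial : ℝ) * (|x| ^ n * |(∫ y in (0 : ℝ)..x, |w y|)|) := by
        gcongr
        exact abs_integral_pow_mul_le hw n
    _ = (|A| * |x|) ^ n / (n.factorial : ℝ) * |(∫ y in (0 : ℝ)..x, |w y|)| := by
        rw [mul_pow]
        ring

end Summability

section ExponentialClaims

theorem conv_nconv_dickson_exp {K μ ρ σ x : ℝ} (hρμ : 0 < ρ + μ) (hx : 0 ≤ x)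
    {f ζ : ℝ → ℝ} (hf : Set.EqOn f (fun u => K * Real.exp (-μ * u)) (Set.Ioi 0))
    (hζ : Set.EqOn ζ (fun y => Real.exp (σ * y)) (Set.Ici 0)) (n : ℕ) :
    conv (nconv (dickson ρ f) n) ζ x
      = (K / (ρ + μ)) ^ (n + 1) / (n.factorial : ℝ) * Real.exp (σ * x)
        * ∫ y in (0 : ℝ)..x, y ^ n * Real.exp (-(σ + μ) * y) := by
  have nonneg_of_mem {y : ℝ} (hy : y ∈ Set.uIcc 0 x) : 0 ≤ y := by
    rw [Set.uIcc_of_le hx] at hy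
    exact hy.1
  have dickson_eq : Set.EqOn (dickson ρ f) (fun y => K / (ρ + μ) * Real.exp (-μ * y))
      (Set.uIcc 0 x) := fun y hy =>
    (dickson_congr (hf.mono (Set.Ioi_subset_Ioi (nonneg_of_mem hy)))).trans
      (dickson_const_mul_exp hρμ K y)
  rw [conv_congr (nconv_congr dickson_eq n) (hζ.mono fun _ => nonneg_of_mem),
    conv_nconv_const_mul_exp_exp]

theorem neumann_series_exponential_claims_general {lam c μ r ρ : ℝ} (hc : c ≠ 0)
    (hρμ : 0 < ρ + μ) {f ζ : ℝ → ℝ}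
    (hf : Set.EqOn f (fun u => μ * Real.exp (-μ * u)) (Set.Ioi 0))
    (hζ : Set.EqOn ζ (fun y => Real.exp (ρ * y)) (Set.Ici 0)) {x : ℝ} (hx : 0 ≤ x) :
    (Summable fun n : ℕ =>
      |(lam * r / c) ^ (n + 1) * conv (nconv (dickson ρ f) n) ζ x|) ∧
    (Summable fun n : ℕ =>
      |(lam * r * μ) ^ (n + 1) /
          ((Nat.factorial n : ℝ) * c ^ (n + 1) * (ρ + μ) ^ (n + 1))
        * Real.exp (ρ * x) * ∫ y in (0 : ℝ)..x, y ^ n * Real.exp (-(ρ + μ) * y)|) ∧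
    ζ x + (∑' n : ℕ, (lam * r / c) ^ (n + 1) * conv (nconv (dickson ρ f) n) ζ x)
      = Real.exp (ρ * x)
        + ∑' n : ℕ,
            (lam * r * μ) ^ (n + 1) /
                ((Nat.factorial n : ℝ) * c ^ (n + 1) * (ρ + μ) ^ (n + 1))
              * Real.exp (ρ * x)
              * ∫ y in (0 : ℝ)..x, y ^ n * Real.exp (-(ρ + μ) * y) := by
  set A : ℝ := lam * r * μ / (c * (ρ + μ)) with hA
  have coeff_eq (n : ℕ) :
      (lam * r * μ) ^ (n + 1) / ((n.factorial : ℝ) * c ^ (n + 1) * (ρ + μ) ^ (n + 1))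
        = A ^ (n + 1) / (n.factorial : ℝ) := by
    rw [hA, div_pow, mul_pow c]
    field_simp
  have term_eq (n : ℕ) : (lam * r / c) ^ (n + 1) * conv (nconv (dickson ρ f) n) ζ x
      = A ^ (n + 1) / (n.factorial : ℝ) * Real.exp (ρ * x)
        * ∫ y in (0 : ℝ)..x, y ^ n * Real.exp (-(ρ + μ) * y) := by
    rw [conv_nconv_dickson_exp hρμ hx hf hζ, hA, ← div_mul_div_comm, mul_pow]
    ring
  have summable_abs : Summable fun n : ℕ => |A ^ (n + 1) / (n.factorial : ℝ) * Real.exp (ρ * x)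
      * ∫ y in (0 : ℝ)..x, y ^ n * Real.exp (-(ρ + μ) * y)| := by
    have hw : IntervalIntegrable (fun y => Real.exp (-(ρ + μ) * y)) volume 0 x :=
      Continuous.intervalIntegrable (by fun_prop) _ _
    refine ((summable_abs_pow_div_factorial_mul_integral_pow_mul hw A).mul_left
      |A * Real.exp (ρ * x)|).congr fun n => ?_
    rw [← abs_mul, pow_succ]
    congr 1
    ring
  simp only [coeff_eq, term_eq, hζ hx, and_true]
  exact ⟨summable_abs, summable_abs⟩

end ExponentialClaims

/-- Explicit evaluation of the Neumann series
`Σ_{n≥0} (λr/c)ⁿ ((T_ρ f)^{*n} * ζ)(x)` for exponential claims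
`f(x) = μ e^{-μx}` and `ζ(x) = e^{ρx}`; both series converge absolutely. -/
theorem neumann_series_exponential_claims
    (lam c μ r ρ : ℝ) (hlam : 0 < lam) (hc : 0 < c) (hμ : 0 < μ)
    (hr : r ∈ Set.Ioc (0 : ℝ) 1) (hρ : 0 ≤ ρ)
    (f ζ : ℝ → ℝ)
    (hf : ∀ x, f x = if 0 < x then μ * Real.exp (-μ * x) else 0)
    (hζ : ∀ x, ζ x = if 0 ≤ x then Real.exp (ρ * x) else 0)
    (x : ℝ) (hx : 0 ≤ x) :
    (Summable fun n : ℕ =>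
      |(lam * r / c) ^ (n + 1) * conv (nconv (dickson ρ f) n) ζ x|) ∧
    (Summable fun n : ℕ =>
      |(lam * r * μ) ^ (n + 1) /
          ((Nat.factorial n : ℝ) * c ^ (n + 1) * (ρ + μ) ^ (n + 1))
        * Real.exp (ρ * x) * ∫ y in (0 : ℝ)..x, y ^ n * Real.exp (-(ρ + μ) * y)|) ∧
    ζ x + (∑' n : ℕ, (lam * r / c) ^ (n + 1) * conv (nconv (dickson ρ f) n) ζ x)
      = Real.exp (ρ * x)
        + ∑' n : ℕ,
            (lam * r * μ) ^ (n + 1) /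
                ((Nat.factorial n : ℝ) * c ^ (n + 1) * (ρ + μ) ^ (n + 1))
              * Real.exp (ρ * x)
              * ∫ y in (0 : ℝ)..x, y ^ n * Real.exp (-(ρ + μ) * y) :=
  neumann_series_exponential_claims_general hc.ne' (by positivity)
    (fun u hu => (hf u).trans (if_pos hu)) (fun y hy => (hζ y).trans (if_pos hy)) hx
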